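/- Let N ≥ 2 and let m : 𝕋 → ℂ be a measurable essentially bounded function on the circle 𝕋 (with normalized Haar measure) such that (1/N) ∑_{w : w^N = z} |m(w)|² = 1 for almost every z ∈ 𝕋, so that the operator S_m on L²(𝕋) defined by (S_m ξ)(z) = m(z) ξ(z^N) is an isometry. Then the subspace P_U L²(𝕋) := ⋂_{k≥1} S_m^k(L²(𝕋)) corresponding to the unitary part of the Wold decomposition of S_m has dimension at most 1. Moreover, its dimension equals 1 if and only if both of the following hold: (i) |m(z)| = 1 for almost every z ∈ 𝕋, and (ii) there exist a measurable function ξ : 𝕋 → 𝕋 and a scalar λ ∈ 𝕋 such that m(z) ξ(z^N) = λ ξ(z) for almost every z ∈ 𝕋; in that case the subspace equals ℂ·ξ. In short, S_m is a shift (i.e., ⋂_k S_m^k(L²(𝕋)) = {0}) if and only if there is no phase factor λ ∈ 𝕋 such that λ̄·m is a coboundary for the map z ↦ z^N with values in 𝕋. -/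

import Mathlib

open MeasureTheory Real

noncomputable section

instance : Fact (0 < 2 * Real.pi) := ⟨by positivity⟩

/-- The circle `𝕋 = ℝ/2πℤ`, written additively; the point `(t : 𝕋)` corresponds to `e^{-it}`,
and `N • z` corresponds to `z ↦ z^N`. -/
abbrev Circle2π : Type := AddCircle (2 * Real.pi)

/-- Normalized Haar (probability) measure on the circle. -/
abbrev haarT : Measure Circle2π := AddCircle.haarAddCircle

/-!
The means of an integrable function over the fibres of `z ↦ z ^ M` converge in `L¹` to its integral
as `M → ∞`: on trigonometric polynomials they are eventually equal to it, and they are `L¹`-bounded.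
If `f = S ^ k u` and `g = S ^ k v`, the isometry condition says that the mean of `f * conj g` over
the fibres of `z ↦ z ^ (N ^ k)` is `u * conj v` evaluated at `z ^ (N ^ k)`. Hence, if `f` and `g`
lie in the unitary part, their preimages `u k` and `v k` under `S ^ k` satisfy
`u k * conj (v k) → ⟪g, f⟫` in `L¹`. For orthogonal `f` and `g` this would make the moduli of `u k`
and `v k` asymptotically constant while their product tends to `0`, so `f = 0` or `g = 0`, and the
unitary part is at most a line. A vector `f` spanning that line is an eigenvector, so `u k` is a
unimodular multiple of `f`, and the limit shows that `‖f z‖` is constant.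
-/

open Filter Topology AddCircle
open scoped ENNReal InnerProductSpace

section FiberMean

variable {T : ℝ} {E : Type*}

/-- The mean of `h` over the coset `{z + k * (T / M) | k < M}`, that is, over the fibre through `z`
of the map `z ↦ M • z`. It is `0` for `M = 0`. -/
def fiberMean [AddCommGroup E] [Module ℝ E] (M : ℕ) (h : AddCircle T → E) (z : AddCircle T) : E :=
  (1 / M : ℝ) • ∑ k : Fin M, h (z + (((k : ℕ) : ℝ) * (T / M) : ℝ))

theorem nsmul_add_coe_mul_period_div {N : ℕ} (hN : N ≠ 0) (z : AddCircle T) (j : ℕ) :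
    N • (z + (((j : ℝ) * (T / N) : ℝ) : AddCircle T)) = N • z := by
  have hjT : N • ((j : ℝ) * (T / N)) = j • T := by
    simp only [nsmul_eq_mul]
    field_simp
  rw [smul_add, ← AddCircle.coe_nsmul, hjT, AddCircle.coe_nsmul, AddCircle.coe_period, smul_zero,
    add_zero]

section Algebra

variable [AddCommGroup E] [Module ℝ E]

theorem fiberMean_zero_left (h : AddCircle T → E) (z : AddCircle T) : fiberMean 0 h z = 0 := by
  simp [fiberMean]

theorem fiberMean_one_left (h : AddCircle T → E) (z : AddCircle T) : fiberMean 1 h z = h z := by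
  simp [fiberMean]

theorem fiberMean_const {M : ℕ} (hM : M ≠ 0) (c : E) (z : AddCircle T) :
    fiberMean M (fun _ => c) z = c := by
  have hM' : (M : ℝ) ≠ 0 := Nat.cast_ne_zero.2 hM
  simp [fiberMean, ← Nat.cast_smul_eq_nsmul ℝ, smul_smul, hM']

theorem fiberMean_add (M : ℕ) (g h : AddCircle T → E) (z : AddCircle T) :
    fiberMean M (fun w => g w + h w) z = fiberMean M g z + fiberMean M h z := by
  simp only [fiberMean, Finset.sum_add_distrib, smul_add]

theorem fiberMean_sub (M : ℕ) (g h : AddCircle T → E) (z : AddCircle T) :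
    fiberMean M (fun w => g w - h w) z = fiberMean M g z - fiberMean M h z := by
  simp only [fiberMean, Finset.sum_sub_distrib, smul_sub]

theorem fiberMean_smul {R : Type*} [Monoid R] [DistribMulAction R E] [SMulCommClass ℝ R E]
    (M : ℕ) (c : R) (h : AddCircle T → E) (z : AddCircle T) :
    fiberMean M (fun w => c • h w) z = c • fiberMean M h z := by
  simp only [fiberMean, ← Finset.smul_sum, smul_comm]

theorem fiberMean_smul_comp_nsmul {N : ℕ} (hN : N ≠ 0) (a : AddCircle T → ℝ) (H : AddCircle T → E)
    (z : AddCircle T) :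
    fiberMean N (fun w => a w • H (N • w)) z = fiberMean N a z • H (N • z) := by
  simp only [fiberMean, nsmul_add_coe_mul_period_div hN, ← Finset.sum_smul, smul_eq_mul, mul_smul]

theorem fiberMean_mul {N M : ℕ} (hN : N ≠ 0) (hM : M ≠ 0) (h : AddCircle T → E) (z : AddCircle T) :
    fiberMean (N * M) h z =
      (1 / M : ℝ) • ∑ l : Fin M, fiberMean N h (z + ((((l : ℕ) : ℝ) * (T / (N * M)) : ℝ))) := by
  have hN' : (N : ℝ) ≠ 0 := Nat.cast_ne_zero.2 hN
  have hM' : (M : ℝ) ≠ 0 := Nat.cast_ne_zero.2 hM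
  simp only [fiberMean]
  rw [← finProdFinEquiv.sum_comp, Fintype.sum_prod_type_right, ← Finset.smul_sum, smul_smul]
  congr 1
  · push_cast
    field_simp
  · refine Finset.sum_congr rfl fun l _ => Finset.sum_congr rfl fun i _ => ?_
    rw [add_assoc, ← AddCircle.coe_add]
    congr 3
    simp only [finProdFinEquiv_apply_val]
    push_cast
    field_simp

end Algebra

theorem norm_fiberMean_le [SeminormedAddCommGroup E] [NormedSpace ℝ E] (M : ℕ)
    (h : AddCircle T → E) (z : AddCircle T) :
    ‖fiberMean M h z‖ ≤ fiberMean M (fun w => ‖h w‖) z := by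
  simp only [fiberMean, norm_smul, smul_eq_mul]
  gcongr
  · simp
  · exact norm_sum_le _ _

theorem fourier_add_coe_mul_period_div [hT : Fact (0 < T)] {M : ℕ} (n : ℤ) (z : AddCircle T)
    (k : ℕ) :
    fourier n (z + (((k : ℝ) * (T / M) : ℝ) : AddCircle T)) =
      fourier n z * (Complex.exp (2 * π * Complex.I / M) ^ n) ^ k := by
  have hT' : (T : ℂ) ≠ 0 := Complex.ofReal_ne_zero.2 hT.out.ne'
  have hadd : fourier n (z + (((k : ℝ) * (T / M) : ℝ) : AddCircle T)) =
      fourier n z * fourier n (((k : ℝ) * (T / M) : ℝ) : AddCircle T) := by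
    simp only [fourier_apply, smul_add, AddCircle.toCircle_add, Circle.coe_mul]
  rw [hadd, fourier_coe_apply, ← Complex.exp_int_mul, ← Complex.exp_nat_mul]
  congr 2
  push_cast
  field_simp

theorem fiberMean_fourier_of_not_dvd [Fact (0 < T)] {M : ℕ} {n : ℤ} (hn : ¬ (M : ℤ) ∣ n)
    (z : AddCircle T) : fiberMean M (fourier n) z = 0 := by
  rcases eq_or_ne M 0 with rfl | hM
  · exact fiberMean_zero_left _ z
  have hζ := Complex.isPrimitiveRoot_exp M hM
  set ζ := Complex.exp (2 * π * Complex.I / M) with hζ_def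
  have hne : ζ ^ n ≠ 1 := fun h => hn ((hζ.zpow_eq_one_iff_dvd n).1 h)
  have hpow : (ζ ^ n) ^ M = 1 := by
    rw [← zpow_natCast, zpow_comm, zpow_natCast, hζ.pow_eq_one, one_zpow]
  simp only [fiberMean, fourier_add_coe_mul_period_div, ← hζ_def]
  rw [← Finset.mul_sum, Fin.sum_univ_eq_sum_range (fun k => (ζ ^ n) ^ k) M, geom_sum_eq hne, hpow,
    sub_self, zero_div, mul_zero, smul_zero]

section Measure

variable [hT : Fact (0 < T)]

theorem measurePreserving_nsmul_haarAddCircle {M : ℕ} (hM : M ≠ 0) :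
    MeasurePreserving (fun z : AddCircle T => M • z) haarAddCircle haarAddCircle := by
  simpa only [natCast_zsmul] using
    Measure.measurePreserving_zsmul haarAddCircle (Int.natCast_ne_zero.2 hM)

theorem ae_comp_nsmul {P : AddCircle T → Prop} (hP : ∀ᵐ z ∂haarAddCircle, P z) {M : ℕ}
    (hM : M ≠ 0) : ∀ᵐ z ∂haarAddCircle, P (M • z) :=
  (measurePreserving_nsmul_haarAddCircle hM).quasiMeasurePreserving.ae hP

theorem ae_comp_add_right {P : AddCircle T → Prop} (hP : ∀ᵐ z ∂haarAddCircle, P z)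
    (t : AddCircle T) : ∀ᵐ z ∂haarAddCircle, P (z + t) :=
  (measurePreserving_add_right haarAddCircle t).quasiMeasurePreserving.ae hP

section Normed

variable [NormedAddCommGroup E] [NormedSpace ℝ E]

theorem integral_comp_nsmul {M : ℕ} (hM : M ≠ 0) {h : AddCircle T → E}
    (hh : AEStronglyMeasurable h haarAddCircle) :
    ∫ z, h (M • z) ∂haarAddCircle = ∫ z, h z ∂haarAddCircle := by
  have hmp := measurePreserving_nsmul_haarAddCircle (T := T) hM
  rw [← integral_map hmp.aemeasurable (hmp.map_eq.symm ▸ hh), hmp.map_eq]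

theorem fiberMean_congr_ae {g h : AddCircle T → E} (hgh : g =ᵐ[haarAddCircle] h) (M : ℕ) :
    fiberMean M g =ᵐ[haarAddCircle] fiberMean M h := by
  filter_upwards [ae_all_iff.2 fun k : Fin M =>
    ae_comp_add_right hgh (((k : ℕ) : ℝ) * (T / M) : ℝ)] with z hz
  simp only [fiberMean, hz]

theorem integrable_fiberMean {h : AddCircle T → E} (hh : Integrable h haarAddCircle) (M : ℕ) :
    Integrable (fiberMean M h) haarAddCircle :=
  (integrable_finsetSum _ fun _ _ => hh.comp_add_right _).smul _

theorem integral_fiberMean {M : ℕ} (hM : M ≠ 0) {h : AddCircle T → E}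
    (hh : Integrable h haarAddCircle) :
    ∫ z, fiberMean M h z ∂haarAddCircle = ∫ z, h z ∂haarAddCircle := by
  have hM' : (M : ℝ) ≠ 0 := Nat.cast_ne_zero.2 hM
  simp only [fiberMean]
  rw [integral_smul, integral_finsetSum _ fun _ _ => hh.comp_add_right _]
  simp [integral_add_right_eq_self, ← Nat.cast_smul_eq_nsmul ℝ, smul_smul, hM']

theorem integral_norm_fiberMean_le {M : ℕ} (hM : M ≠ 0) {h : AddCircle T → E}
    (hh : Integrable h haarAddCircle) :
    ∫ z, ‖fiberMean M h z‖ ∂haarAddCircle ≤ ∫ z, ‖h z‖ ∂haarAddCircle :=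
  (integral_mono (integrable_fiberMean hh M).norm (integrable_fiberMean hh.norm M)
    (norm_fiberMean_le M h)).trans_eq (integral_fiberMean hM hh.norm)

theorem integral_norm_fiberMean_sub_integral_le {M : ℕ} (hM : M ≠ 0) {h : AddCircle T → E}
    (hh : Integrable h haarAddCircle) :
    ∫ z, ‖fiberMean M h z - ∫ w, h w ∂haarAddCircle‖ ∂haarAddCircle ≤
      2 * ∫ z, ‖h z‖ ∂haarAddCircle := by
  have hmean := (integrable_fiberMean hh M).norm
  calc ∫ z, ‖fiberMean M h z - ∫ w, h w ∂haarAddCircle‖ ∂haarAddCircle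
      ≤ ∫ z, (‖fiberMean M h z‖ + ‖∫ w, h w ∂haarAddCircle‖) ∂haarAddCircle :=
        integral_mono ((integrable_fiberMean hh M).sub (integrable_const _)).norm
          (hmean.add (integrable_const _)) fun _ => norm_sub_le _ _
    _ = ∫ z, ‖fiberMean M h z‖ ∂haarAddCircle + ‖∫ w, h w ∂haarAddCircle‖ := by
        rw [integral_add hmean (integrable_const _), integral_const, probReal_univ, one_smul]
    _ ≤ ∫ z, ‖h z‖ ∂haarAddCircle + ∫ z, ‖h z‖ ∂haarAddCircle :=
        add_le_add (integral_norm_fiberMean_le hM hh) (norm_integral_le_integral_norm _)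
    _ = 2 * ∫ z, ‖h z‖ ∂haarAddCircle := (two_mul _).symm

theorem fiberMean_mul_smul_comp_nsmul {N M : ℕ} (hN : N ≠ 0) (hM : M ≠ 0) {a : AddCircle T → ℝ}
    (ha : ∀ᵐ z ∂haarAddCircle, fiberMean N a z = 1) (H : AddCircle T → E) :
    ∀ᵐ z ∂haarAddCircle,
      fiberMean (N * M) (fun w => a w • H (N • w)) z = fiberMean M H (N • z) := by
  filter_upwards [ae_all_iff.2 fun l : Fin M =>
    ae_comp_add_right ha (((l : ℕ) : ℝ) * (T / (N * M)) : ℝ)] with z hz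
  rw [fiberMean_mul hN hM, fiberMean]
  congr 1
  refine Finset.sum_congr rfl fun l _ => ?_
  rw [fiberMean_smul_comp_nsmul hN, hz l, one_smul, smul_add, ← AddCircle.coe_nsmul]
  congr 3
  simp only [nsmul_eq_mul]
  field_simp

end Normed

theorem integral_fourier_of_ne_zero {n : ℤ} (hn : n ≠ 0) :
    ∫ z : AddCircle T, fourier n z ∂haarAddCircle = 0 :=
  integral_eq_zero_of_add_right_eq_neg (fourier_add_half_inv_index hn hT.out)

theorem integrable_haarAddCircle_of_continuousMap (p : C(AddCircle T, ℂ)) :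
    Integrable p haarAddCircle :=
  p.continuous.integrable_of_hasCompactSupport (.of_compactSpace _)

theorem eventually_fiberMean_eq_integral {p : C(AddCircle T, ℂ)}
    (hp : p ∈ Submodule.span ℂ (Set.range (@fourier T))) :
    ∀ᶠ M in atTop, ∀ z, fiberMean M p z = ∫ w, p w ∂haarAddCircle := by
  induction hp using Submodule.span_induction with
  | mem _ hx =>
    obtain ⟨n, rfl⟩ := hx
    filter_upwards [eventually_gt_atTop n.natAbs] with M hM z
    rcases eq_or_ne n 0 with rfl | hn
    · have hone : ⇑(fourier 0) = fun _ : AddCircle T => (1 : ℂ) := funext fun _ => fourier_zero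
      rw [hone, fiberMean_const (Nat.ne_zero_of_lt hM), integral_const, probReal_univ, one_smul]
    · have hdvd : ¬ (M : ℤ) ∣ n := fun h => hn (Int.eq_zero_of_dvd_of_natAbs_lt_natAbs h hM)
      rw [fiberMean_fourier_of_not_dvd hdvd, integral_fourier_of_ne_zero hn]
  | zero => exact .of_forall fun M z => by simp [fiberMean]
  | add p q _ _ hp hq =>
    filter_upwards [hp, hq] with M hpM hqM z
    simp only [ContinuousMap.add_apply, ContinuousMap.coe_add, Pi.add_def]
    rw [fiberMean_add, hpM, hqM, integral_add (integrable_haarAddCircle_of_continuousMap p)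
      (integrable_haarAddCircle_of_continuousMap q)]
  | smul c p _ hp =>
    filter_upwards [hp] with M hpM z
    simp only [ContinuousMap.smul_apply, ContinuousMap.coe_smul, Pi.smul_def]
    rw [fiberMean_smul, hpM, integral_smul]

theorem exists_mem_span_fourier_integral_norm_sub_lt {h : AddCircle T → ℂ}
    (hh : Integrable h haarAddCircle) {ε : ℝ} (hε : 0 < ε) :
    ∃ p ∈ Submodule.span ℂ (Set.range (@fourier T)),
      ∫ z, ‖h z - p z‖ ∂haarAddCircle < ε := by
  have hdense := (ContinuousMap.toLp_denseRange ℂ (haarAddCircle (T := T)) ℂ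
    ENNReal.one_ne_top).dense_image (ContinuousLinearMap.continuous _)
    (Submodule.dense_iff_topologicalClosure_eq_top.2 span_fourier_closure_eq_top)
  obtain ⟨_, ⟨p, hp, rfl⟩, hdist⟩ := hdense.exists_dist_lt (hh.toL1 h) hε
  refine ⟨p, hp, hdist.trans_eq' ?_⟩
  rw [dist_eq_norm, L1.norm_eq_integral_norm]
  refine integral_congr_ae ?_
  filter_upwards [Lp.coeFn_sub (hh.toL1 h) (ContinuousMap.toLp 1 haarAddCircle ℂ p),
    hh.coeFn_toL1, ContinuousMap.coeFn_toLp (p := 1) (𝕜 := ℂ) haarAddCircle p] with z hsub hhz hpz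
  rw [hsub, Pi.sub_apply, hhz, hpz]

theorem tendsto_integral_norm_fiberMean_sub_integral {h : AddCircle T → ℂ}
    (hh : Integrable h haarAddCircle) :
    Tendsto (fun M => ∫ z, ‖fiberMean M h z - ∫ w, h w ∂haarAddCircle‖ ∂haarAddCircle) atTop
      (𝓝 0) := by
  refine tendsto_order.2 ⟨fun a ha => .of_forall fun M => ha.trans_le ?_, fun ε hε => ?_⟩
  · exact integral_nonneg fun z => norm_nonneg (fiberMean M h z - _)
  obtain ⟨p, hp, hhp⟩ := exists_mem_span_fourier_integral_norm_sub_lt hh (half_pos hε)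
  have hp_int := integrable_haarAddCircle_of_continuousMap p
  filter_upwards [eventually_fiberMean_eq_integral hp, eventually_ne_atTop 0] with M hMp hM
  calc ∫ z, ‖fiberMean M h z - ∫ w, h w ∂haarAddCircle‖ ∂haarAddCircle
      = ∫ z, ‖fiberMean M (fun w => h w - p w) z - ∫ w, (h w - p w) ∂haarAddCircle‖
          ∂haarAddCircle := by
        simp only [fiberMean_sub, hMp, integral_sub hh hp_int, sub_sub_sub_cancel_right]
    _ ≤ 2 * ∫ z, ‖h z - p z‖ ∂haarAddCircle :=
        integral_norm_fiberMean_sub_integral_le hM (hh.sub hp_int)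
    _ < ε := by linarith

end Measure

end FiberMean

section WoldUnitaryPart

/-- The unitary part of the Wold decomposition of an isometry `S`: the intersection of the ranges of
its positive powers. It is `⊥` exactly when `S` is a shift. -/
def woldUnitaryPart {R V : Type*} [Semiring R] [AddCommMonoid V] [TopologicalSpace V] [Module R V]
    (S : V →L[R] V) : Submodule R V :=
  ⨅ k : ℕ, LinearMap.range (S ^ (k + 1)).toLinearMap

section Semiring

variable {R V : Type*} [Semiring R] [AddCommMonoid V] [TopologicalSpace V] [Module R V]
  {S : V →L[R] V} {f : V}

theorem coe_woldUnitaryPart (S : V →L[R] V) :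
    (woldUnitaryPart S : Set V) = ⋂ k : ℕ, Set.range ⇑(S ^ (k + 1)) :=
  Submodule.coe_iInf _

theorem mem_woldUnitaryPart_iff :
    f ∈ woldUnitaryPart S ↔ ∀ k : ℕ, ∃ u, (S ^ k) u = f := by
  refine ⟨fun hf k => ?_, fun hf => Submodule.mem_iInf _ |>.2 fun k => hf (k + 1)⟩
  cases k with
  | zero => exact ⟨f, rfl⟩
  | succ k => exact (Submodule.mem_iInf _).1 hf k

theorem apply_mem_woldUnitaryPart (hf : f ∈ woldUnitaryPart S) : S f ∈ woldUnitaryPart S := by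
  refine mem_woldUnitaryPart_iff.2 fun k => ?_
  obtain ⟨u, rfl⟩ := mem_woldUnitaryPart_iff.1 hf k
  exact ⟨S u, by rw [← mul_apply_eq_comp, ← mul_apply_eq_comp, ← pow_succ, ← pow_succ']⟩

end Semiring

section Field

variable {𝕜 V : Type*} [Field 𝕜] [AddCommGroup V] [TopologicalSpace V] [Module 𝕜 V]
  {S : V →L[𝕜] V} {f : V} {c : 𝕜}

theorem pow_apply_inv_pow_smul (hc : c ≠ 0) (hf : S f = c • f) (k : ℕ) :
    (S ^ k) (c⁻¹ ^ k • f) = f := by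
  induction k with
  | zero => simp
  | succ k ih =>
    rw [pow_succ S, mul_apply_eq_comp, map_smul S, hf, smul_smul, pow_succ, mul_assoc,
      inv_mul_cancel₀ hc, mul_one, ih]

theorem mem_woldUnitaryPart_of_apply_eq_smul (hc : c ≠ 0) (hf : S f = c • f) :
    f ∈ woldUnitaryPart S :=
  mem_woldUnitaryPart_iff.2 fun k => ⟨_, pow_apply_inv_pow_smul hc hf k⟩

end Field

end WoldUnitaryPart

section InnerProductSpace

variable {𝕜 V W : Type*} [RCLike 𝕜] [NormedAddCommGroup V] [InnerProductSpace 𝕜 V]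
  [NormedAddCommGroup W] [InnerProductSpace 𝕜 W]

theorem norm_inner_self_sub_inner_self (x : V) (y : W) :
    ‖⟪x, x⟫_𝕜 - ⟪y, y⟫_𝕜‖ = |‖x‖ ^ 2 - ‖y‖ ^ 2| := by
  rw [inner_self_eq_norm_sq_to_K, inner_self_eq_norm_sq_to_K, ← RCLike.ofReal_pow,
    ← RCLike.ofReal_pow, ← RCLike.ofReal_sub, RCLike.norm_ofReal]

theorem eq_span_singleton_of_forall_inner_eq_zero {K : Submodule 𝕜 V}
    (hK : ∀ f ∈ K, ∀ g ∈ K, ⟪f, g⟫_𝕜 = 0 → f = 0 ∨ g = 0) {f : V} (hf : f ∈ K) (hf0 : f ≠ 0) :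
    K = Submodule.span 𝕜 {f} := by
  have hle : Submodule.span 𝕜 {f} ≤ K := (Submodule.span_singleton_le_iff_mem f K).2 hf
  have hbot : (Submodule.span 𝕜 {f})ᗮ ⊓ K = ⊥ := by
    refine (Submodule.eq_bot_iff _).2 fun g hg => ?_
    exact (hK f hf g hg.2 (Submodule.mem_orthogonal_singleton_iff_inner_right.1 hg.1)).resolve_left
      hf0
  rw [← Submodule.sup_orthogonal_inf_of_hasOrthogonalProjection hle, hbot, sup_bot_eq]

end InnerProductSpace

theorem min_le_abs_sq_sub_add_abs_sq_sub_add_mul {a b : ℝ} (ha : 0 ≤ a) (hb : 0 ≤ b) (A B : ℝ) :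
    min A B ≤ |a ^ 2 - A| + |b ^ 2 - B| + a * b := by
  have hA := neg_abs_le (a ^ 2 - A)
  have hB := neg_abs_le (b ^ 2 - B)
  rcases le_total a b with hab | hba
  · exact (min_le_left A B).trans (by nlinarith [abs_nonneg (b ^ 2 - B)])
  · exact (min_le_right A B).trans (by nlinarith [abs_nonneg (a ^ 2 - A)])

section L2

variable {X 𝕜 : Type*} [MeasurableSpace X] {μ : Measure X} [RCLike 𝕜]

theorem integrable_norm_inner_sub_const {F : Type*} [NormedAddCommGroup F] [InnerProductSpace 𝕜 F]
    [IsFiniteMeasure μ] (x y : Lp F 2 μ) (c : 𝕜) :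
    Integrable (fun z => ‖⟪x z, y z⟫_𝕜 - c‖) μ :=
  ((L2.integrable_inner x y).sub (integrable_const c)).norm

theorem min_le_integral_abs_sq_sub_add_integral_norm_inner [IsProbabilityMeasure μ] (x y : Lp 𝕜 2 μ)
    (A B : ℝ) :
    min A B ≤ ∫ z, |‖x z‖ ^ 2 - A| ∂μ + ∫ z, |‖y z‖ ^ 2 - B| ∂μ + ∫ z, ‖⟪x z, y z⟫_𝕜‖ ∂μ := by
  have hsq (w : Lp 𝕜 2 μ) (C : ℝ) : Integrable (fun z => |‖w z‖ ^ 2 - C|) μ :=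
    ((Lp.memLp w).integrable_norm_pow two_ne_zero |>.sub (integrable_const C)).norm
  have hsum : Integrable (fun z => |‖x z‖ ^ 2 - A| + |‖y z‖ ^ 2 - B|) μ := (hsq x A).add (hsq y B)
  have hinner : Integrable (fun z => ‖⟪x z, y z⟫_𝕜‖) μ := (L2.integrable_inner x y).norm
  calc min A B = ∫ _, min A B ∂μ := by rw [integral_const, probReal_univ, one_smul]
    _ ≤ ∫ z, (|‖x z‖ ^ 2 - A| + |‖y z‖ ^ 2 - B| + ‖⟪x z, y z⟫_𝕜‖) ∂μ := by
        refine integral_mono (integrable_const _) (hsum.add hinner) fun z => ?_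
        have hmul : ‖⟪x z, y z⟫_𝕜‖ = ‖x z‖ * ‖y z‖ := by simp [mul_comm]
        simpa only [hmul] using min_le_abs_sq_sub_add_abs_sq_sub_add_mul (norm_nonneg _)
          (norm_nonneg _) A B
    _ = _ := by rw [integral_add hsum hinner, integral_add (hsq x A) (hsq y B)]

end L2

section WeightedComposition

variable {T : ℝ} [Fact (0 < T)] {N : ℕ} {m : AddCircle T → ℂ} {lam : ℂ}
  {S : Lp ℂ 2 (haarAddCircle (T := T)) →L[ℂ] Lp ℂ 2 (haarAddCircle (T := T))}
  {f g : Lp ℂ 2 (haarAddCircle (T := T))} {ξ : AddCircle T → ℂ}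

/-- `S` is the weighted composition operator `S_m` on `L²(𝕋)` given by `(S_m ξ)(z) = m(z) ξ(z^N)`,
with the circle written additively. -/
def IsWeightedComposition (N : ℕ) (m : AddCircle T → ℂ)
    (S : Lp ℂ 2 (haarAddCircle (T := T)) →L[ℂ] Lp ℂ 2 (haarAddCircle (T := T))) : Prop :=
  ∀ ξ : Lp ℂ 2 haarAddCircle, ⇑(S ξ) =ᵐ[haarAddCircle] fun z => m z * ξ (N • z)

/-- `ξ : 𝕋 → 𝕋` is a measurable eigenfunction of `ξ ↦ m(z) ξ(z^N)` with eigenvalue `lam ∈ 𝕋`.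
Both `ξ` and `lam` are complex valued, of modulus one. -/
structure IsUnimodularEigenfunction (N : ℕ) (m : AddCircle T → ℂ) (ξ : AddCircle T → ℂ) (lam : ℂ) :
    Prop where
  measurable : Measurable ξ
  norm_eq_one : ∀ z, ‖ξ z‖ = 1
  norm_eigenvalue : ‖lam‖ = 1
  ae_eq : ∀ᵐ z ∂haarAddCircle, m z * ξ (N • z) = lam * ξ z

namespace IsUnimodularEigenfunction

theorem norm_weight_ae_eq_one (hξ : IsUnimodularEigenfunction N m ξ lam) :
    ∀ᵐ z ∂haarAddCircle, ‖m z‖ = 1 := by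
  filter_upwards [hξ.ae_eq] with z hz
  simpa [hξ.norm_eq_one, hξ.norm_eigenvalue] using congrArg norm hz

theorem memLp (hξ : IsUnimodularEigenfunction N m ξ lam) (p : ℝ≥0∞) : MemLp ξ p haarAddCircle :=
  .of_bound hξ.measurable.aestronglyMeasurable 1 (ae_of_all _ fun z => (hξ.norm_eq_one z).le)

theorem toLp_ne_zero (hξ : IsUnimodularEigenfunction N m ξ lam) : (hξ.memLp 2).toLp ≠ 0 := by
  intro h0
  obtain ⟨z, hz⟩ := ((MemLp.toLp_eq_toLp_iff (hξ.memLp 2) MemLp.zero).1 h0).exists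
  simpa [hz] using hξ.norm_eq_one z

end IsUnimodularEigenfunction

theorem conj_mul_eq_mul_inv_iff {𝕜 : Type*} [RCLike 𝕜] {c a x y : 𝕜} (hc : ‖c‖ = 1) (hy : y ≠ 0) :
    (starRingEnd 𝕜) c * a = x * y⁻¹ ↔ a * y = c * x := by
  have hc0 : c ≠ 0 := norm_ne_zero_iff.1 (hc ▸ one_ne_zero)
  rw [← RCLike.inv_eq_conj hc, eq_mul_inv_iff_mul_eq₀ hy, mul_assoc, inv_mul_eq_iff_eq_mul₀ hc0]

theorem isUnimodularEigenfunction_iff_coboundary :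
    IsUnimodularEigenfunction N m ξ lam ↔ ‖lam‖ = 1 ∧ Measurable ξ ∧ (∀ z, ‖ξ z‖ = 1) ∧
      ∀ᵐ z ∂haarAddCircle, (starRingEnd ℂ) lam * m z = ξ z * (ξ (N • z))⁻¹ := by
  have hiff (hlam : ‖lam‖ = 1) (hξ : ∀ z, ‖ξ z‖ = 1) (z : AddCircle T) :=
    conj_mul_eq_mul_inv_iff (a := m z) (x := ξ z) hlam
      (norm_ne_zero_iff.1 ((hξ (N • z)).symm ▸ one_ne_zero))
  constructor
  · rintro ⟨hmeas, hξ, hlam, hae⟩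
    exact ⟨hlam, hmeas, hξ, by simpa only [hiff hlam hξ] using hae⟩
  · rintro ⟨hlam, hmeas, hξ, hae⟩
    exact ⟨hmeas, hξ, hlam, by simpa only [hiff hlam hξ] using hae⟩

namespace IsWeightedComposition

theorem apply_eq_smul_iff (hS : IsWeightedComposition N m S) (hN : N ≠ 0)
    (hfξ : f =ᵐ[haarAddCircle] ξ) :
    S f = lam • f ↔ ∀ᵐ z ∂haarAddCircle, m z * ξ (N • z) = lam * ξ z := by
  rw [Lp.ext_iff]
  refine eventually_congr ?_
  filter_upwards [hS f, Lp.coeFn_smul lam f, hfξ, ae_comp_nsmul hfξ hN] with z hSf hsmul hz hNz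
  rw [hSf, hsmul, Pi.smul_apply, smul_eq_mul, hz, hNz]

theorem toLp_mem_woldUnitaryPart (hS : IsWeightedComposition N m S) (hN : N ≠ 0)
    (hξ : IsUnimodularEigenfunction N m ξ lam) : (hξ.memLp 2).toLp ∈ woldUnitaryPart S :=
  mem_woldUnitaryPart_of_apply_eq_smul (norm_ne_zero_iff.1 (hξ.norm_eigenvalue ▸ one_ne_zero))
    ((hS.apply_eq_smul_iff hN (hξ.memLp 2).coeFn_toLp).2 hξ.ae_eq)

theorem inner_apply_apply_ae_eq (hS : IsWeightedComposition N m S)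
    (f g : Lp ℂ 2 (haarAddCircle (T := T))) :
    (fun z => ⟪S f z, S g z⟫_ℂ) =ᵐ[haarAddCircle]
      fun z => ‖m z‖ ^ 2 • ⟪f (N • z), g (N • z)⟫_ℂ := by
  filter_upwards [hS f, hS g] with z hf hg
  rw [hf, hg, ← smul_eq_mul, ← smul_eq_mul, inner_smul_left, inner_smul_right, ← mul_assoc,
    Complex.conj_mul', ← Complex.ofReal_pow, Complex.real_smul]

theorem fiberMean_inner_pow_apply (hS : IsWeightedComposition N m S) (hN : N ≠ 0)
    (hm : ∀ᵐ z ∂haarAddCircle, fiberMean N (fun w => ‖m w‖ ^ 2) z = 1)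
    (f g : Lp ℂ 2 (haarAddCircle (T := T))) (k : ℕ) :
    ∀ᵐ z ∂haarAddCircle, fiberMean (N ^ k) (fun w => ⟪(S ^ k) f w, (S ^ k) g w⟫_ℂ) z =
      ⟪f (N ^ k • z), g (N ^ k • z)⟫_ℂ := by
  induction k with
  | zero => exact ae_of_all _ fun z => by simp only [pow_zero, fiberMean_one_left, one_smul,
      one_apply_eq_self]
  | succ k ih =>
    filter_upwards [fiberMean_congr_ae (hS.inner_apply_apply_ae_eq ((S ^ k) f) ((S ^ k) g))
        (N * N ^ k),
      fiberMean_mul_smul_comp_nsmul hN (pow_ne_zero k hN) hm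
        (fun w => ⟪(S ^ k) f w, (S ^ k) g w⟫_ℂ),
      ae_comp_nsmul ih hN] with z hstep hpull hih
    simp only [pow_succ' S, pow_succ' N, mul_apply_eq_comp]
    rw [hstep, hpull, hih, smul_smul, mul_comm N]

theorem inner_apply_apply (hS : IsWeightedComposition N m S) (hN : N ≠ 0)
    (hm : ∀ᵐ z ∂haarAddCircle, fiberMean N (fun w => ‖m w‖ ^ 2) z = 1)
    (f g : Lp ℂ 2 (haarAddCircle (T := T))) : ⟪S f, S g⟫_ℂ = ⟪f, g⟫_ℂ := by
  have hmean := hS.fiberMean_inner_pow_apply hN hm f g 1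
  simp only [pow_one] at hmean
  calc ⟪S f, S g⟫_ℂ = ∫ z, fiberMean N (fun w => ⟪S f w, S g w⟫_ℂ) z ∂haarAddCircle :=
        (integral_fiberMean hN (L2.integrable_inner (S f) (S g))).symm
    _ = ∫ z, ⟪f (N • z), g (N • z)⟫_ℂ ∂haarAddCircle := integral_congr_ae hmean
    _ = ⟪f, g⟫_ℂ :=
        integral_comp_nsmul (h := fun z => ⟪f z, g z⟫_ℂ) hN
          (L2.integrable_inner f g).aestronglyMeasurable

theorem norm_apply (hS : IsWeightedComposition N m S) (hN : N ≠ 0)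
    (hm : ∀ᵐ z ∂haarAddCircle, fiberMean N (fun w => ‖m w‖ ^ 2) z = 1)
    (f : Lp ℂ 2 (haarAddCircle (T := T))) : ‖S f‖ = ‖f‖ := by
  rw [norm_eq_sqrt_re_inner (𝕜 := ℂ), norm_eq_sqrt_re_inner (𝕜 := ℂ) f,
    hS.inner_apply_apply hN hm]

theorem tendsto_integral_norm_inner_sub_inner (hS : IsWeightedComposition N m S) (hN : 1 < N)
    (hm : ∀ᵐ z ∂haarAddCircle, fiberMean N (fun w => ‖m w‖ ^ 2) z = 1)
    {u v : ℕ → Lp ℂ 2 (haarAddCircle (T := T))} (hu : ∀ k, (S ^ k) (u k) = f)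
    (hv : ∀ k, (S ^ k) (v k) = g) :
    Tendsto (fun k => ∫ z, ‖⟪u k z, v k z⟫_ℂ - ⟪f, g⟫_ℂ‖ ∂haarAddCircle) atTop (𝓝 0) := by
  have hN0 : N ≠ 0 := Nat.ne_zero_of_lt hN
  refine ((tendsto_integral_norm_fiberMean_sub_integral (L2.integrable_inner f g)).comp
    (tendsto_pow_atTop_atTop_of_one_lt hN)).congr fun k => ?_
  rw [Function.comp_apply, ← L2.inner_def, ← integral_comp_nsmul (pow_ne_zero k hN0)
    (integrable_norm_inner_sub_const (u k) (v k) _).aestronglyMeasurable]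
  refine integral_congr_ae ?_
  filter_upwards [hS.fiberMean_inner_pow_apply hN0 hm (u k) (v k) k] with z hz
  simp only [← hz, hu, hv]

theorem eq_zero_or_eq_zero_of_inner_eq_zero (hS : IsWeightedComposition N m S) (hN : 1 < N)
    (hm : ∀ᵐ z ∂haarAddCircle, fiberMean N (fun w => ‖m w‖ ^ 2) z = 1)
    (hf : f ∈ woldUnitaryPart S) (hg : g ∈ woldUnitaryPart S) (hfg : ⟪f, g⟫_ℂ = 0) :
    f = 0 ∨ g = 0 := by
  choose u hu using mem_woldUnitaryPart_iff.1 hf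
  choose v hv using mem_woldUnitaryPart_iff.1 hg
  have hlim := ((hS.tendsto_integral_norm_inner_sub_inner hN hm hu hu).add
    (hS.tendsto_integral_norm_inner_sub_inner hN hm hv hv)).add
    (hS.tendsto_integral_norm_inner_sub_inner hN hm hu hv)
  simp only [norm_inner_self_sub_inner_self, hfg, sub_zero, add_zero] at hlim
  rcases min_le_iff.1 (ge_of_tendsto' hlim fun k =>
    min_le_integral_abs_sq_sub_add_integral_norm_inner (u k) (v k) _ _) with h | h
  · exact .inl (norm_eq_zero.1 (pow_eq_zero_iff two_ne_zero |>.1 (h.antisymm (sq_nonneg _))))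
  · exact .inr (norm_eq_zero.1 (pow_eq_zero_iff two_ne_zero |>.1 (h.antisymm (sq_nonneg _))))

theorem woldUnitaryPart_eq_span_singleton (hS : IsWeightedComposition N m S) (hN : 1 < N)
    (hm : ∀ᵐ z ∂haarAddCircle, fiberMean N (fun w => ‖m w‖ ^ 2) z = 1)
    (hf : f ∈ woldUnitaryPart S) (hf0 : f ≠ 0) : woldUnitaryPart S = Submodule.span ℂ {f} :=
  eq_span_singleton_of_forall_inner_eq_zero
    (fun _ hf _ hg => hS.eq_zero_or_eq_zero_of_inner_eq_zero hN hm hf hg) hf hf0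

theorem exists_woldUnitaryPart_eq_span_singleton (hS : IsWeightedComposition N m S) (hN : 1 < N)
    (hm : ∀ᵐ z ∂haarAddCircle, fiberMean N (fun w => ‖m w‖ ^ 2) z = 1) :
    ∃ f, woldUnitaryPart S = Submodule.span ℂ {f} := by
  rcases eq_or_ne (woldUnitaryPart S) ⊥ with hbot | hbot
  · exact ⟨0, hbot.trans (Submodule.span_zero_singleton ℂ).symm⟩
  · obtain ⟨f, hf, hf0⟩ := (Submodule.ne_bot_iff _).1 hbot
    exact ⟨f, hS.woldUnitaryPart_eq_span_singleton hN hm hf hf0⟩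

theorem exists_apply_eq_smul (hS : IsWeightedComposition N m S) (hN : 1 < N)
    (hm : ∀ᵐ z ∂haarAddCircle, fiberMean N (fun w => ‖m w‖ ^ 2) z = 1)
    (hf : f ∈ woldUnitaryPart S) (hf0 : f ≠ 0) : ∃ lam : ℂ, ‖lam‖ = 1 ∧ S f = lam • f := by
  have hSf := apply_mem_woldUnitaryPart hf
  rw [hS.woldUnitaryPart_eq_span_singleton hN hm hf hf0, Submodule.mem_span_singleton] at hSf
  obtain ⟨lam, hlam⟩ := hSf
  have hnorm := hS.norm_apply (Nat.ne_zero_of_lt hN) hm f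
  rw [← hlam, norm_smul, mul_eq_right₀ (norm_ne_zero_iff.2 hf0)] at hnorm
  exact ⟨lam, hnorm, hlam.symm⟩

theorem norm_coeFn_ae_eq_norm (hS : IsWeightedComposition N m S) (hN : 1 < N)
    (hm : ∀ᵐ z ∂haarAddCircle, fiberMean N (fun w => ‖m w‖ ^ 2) z = 1) (hlam : ‖lam‖ = 1)
    (hf : S f = lam • f) : ∀ᵐ z ∂haarAddCircle, ‖f z‖ = ‖f‖ := by
  have hu := pow_apply_inv_pow_smul (norm_ne_zero_iff.1 (hlam ▸ one_ne_zero)) hf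
  have hconst (k : ℕ) : ∫ z, ‖⟪(lam⁻¹ ^ k • f) z, (lam⁻¹ ^ k • f) z⟫_ℂ - ⟪f, f⟫_ℂ‖ ∂haarAddCircle =
      ∫ z, |‖f z‖ ^ 2 - ‖f‖ ^ 2| ∂haarAddCircle := by
    refine integral_congr_ae ?_
    filter_upwards [Lp.coeFn_smul (lam⁻¹ ^ k) f] with z hz
    rw [norm_inner_self_sub_inner_self, hz, Pi.smul_apply, norm_smul, norm_pow, norm_inv, hlam,
      inv_one, one_pow, one_mul]
  have hzero : ∫ z, |‖f z‖ ^ 2 - ‖f‖ ^ 2| ∂haarAddCircle = 0 :=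
    tendsto_nhds_unique tendsto_const_nhds
      ((hS.tendsto_integral_norm_inner_sub_inner hN hm hu hu).congr hconst)
  have hint : Integrable (fun z => |‖f z‖ ^ 2 - ‖f‖ ^ 2|) haarAddCircle := by
    simpa only [norm_inner_self_sub_inner_self] using
      integrable_norm_inner_sub_const f f ⟪f, f⟫_ℂ
  filter_upwards [(integral_eq_zero_iff_of_nonneg (fun _ => abs_nonneg _) hint).1 hzero] with z hz
  exact (sq_eq_sq₀ (norm_nonneg _) (norm_nonneg _)).1 (sub_eq_zero.1 (abs_eq_zero.1 hz))

theorem exists_isUnimodularEigenfunction (hS : IsWeightedComposition N m S) (hN : 1 < N)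
    (hm : ∀ᵐ z ∂haarAddCircle, fiberMean N (fun w => ‖m w‖ ^ 2) z = 1)
    (hbot : woldUnitaryPart S ≠ ⊥) : ∃ ξ lam, IsUnimodularEigenfunction N m ξ lam := by
  obtain ⟨f₀, hf₀, hf₀0⟩ := (Submodule.ne_bot_iff _).1 hbot
  obtain ⟨lam, hlam, hSf₀⟩ := hS.exists_apply_eq_smul hN hm hf₀ hf₀0
  let f := (‖f₀‖ : ℂ)⁻¹ • f₀
  have hf1 : ‖f‖ = 1 := norm_smul_inv_norm hf₀0
  have hSf : S f = lam • f := by rw [map_smul, hSf₀, smul_comm]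
  have hnorm : ∀ᵐ z ∂haarAddCircle, f z ∈ Metric.sphere (0 : ℂ) 1 := by
    simpa only [mem_sphere_zero_iff_norm, hf1] using hS.norm_coeFn_ae_eq_norm hN hm hlam hSf
  obtain ⟨ξ, hξ_meas, hξ_range, hfξ⟩ := (Lp.aestronglyMeasurable f).aemeasurable
    |>.exists_ae_eq_range_subset hnorm (NormedSpace.sphere_nonempty.2 zero_le_one)
  exact ⟨ξ, lam, hξ_meas, fun z => mem_sphere_zero_iff_norm.1 (hξ_range ⟨z, rfl⟩), hlam,
    (hS.apply_eq_smul_iff (Nat.ne_zero_of_lt hN) hfξ).1 hSf⟩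

theorem woldUnitaryPart_ne_bot_iff (hS : IsWeightedComposition N m S) (hN : 1 < N)
    (hm : ∀ᵐ z ∂haarAddCircle, fiberMean N (fun w => ‖m w‖ ^ 2) z = 1) :
    woldUnitaryPart S ≠ ⊥ ↔ ∃ ξ lam, IsUnimodularEigenfunction N m ξ lam := by
  refine ⟨hS.exists_isUnimodularEigenfunction hN hm, ?_⟩
  rintro ⟨ξ, lam, hξ⟩
  exact (Submodule.ne_bot_iff _).2
    ⟨_, hS.toLp_mem_woldUnitaryPart (Nat.ne_zero_of_lt hN) hξ, hξ.toLp_ne_zero⟩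

theorem mem_woldUnitaryPart_iff_exists_ae_eq (hS : IsWeightedComposition N m S) (hN : 1 < N)
    (hm : ∀ᵐ z ∂haarAddCircle, fiberMean N (fun w => ‖m w‖ ^ 2) z = 1)
    (hξ : IsUnimodularEigenfunction N m ξ lam) :
    f ∈ woldUnitaryPart S ↔ ∃ c : ℂ, f =ᵐ[haarAddCircle] fun z => c * ξ z := by
  rw [hS.woldUnitaryPart_eq_span_singleton hN hm
    (hS.toLp_mem_woldUnitaryPart (Nat.ne_zero_of_lt hN) hξ) hξ.toLp_ne_zero,
    Submodule.mem_span_singleton]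
  refine exists_congr fun c => ?_
  rw [eq_comm, Lp.ext_iff]
  refine eventually_congr ?_
  filter_upwards [Lp.coeFn_smul c (hξ.memLp 2).toLp, (hξ.memLp 2).coeFn_toLp] with z hsmul hz
  rw [hsmul, Pi.smul_apply, hz, smul_eq_mul]

end IsWeightedComposition

end WeightedComposition

/-- **Theorem 3.1.** The Wold decomposition of the isometry `(S_m ξ)(z) = m(z) ξ(z^N)`:
its unitary part is at most one-dimensional; it is one-dimensional iff `|m| = 1` a.e. and `m`
admits a unimodular eigenfunction `m(z) ξ(z^N) = λ ξ(z)`, and then the unitary subspace is `ℂ ξ`.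
In short, `S_m` is a shift iff no `λ̄ m` is a coboundary for `z ↦ z^N` with values in `𝕋`. -/
theorem wold_decomposition_of_weighted_composition_isometry
    (N : ℕ) (hN : 2 ≤ N)
    (m : Circle2π → ℂ) (hm_meas : Measurable m)
    -- the isometry condition: `(1/N) ∑_{w^N = z} |m(w)|² = 1` a.e.
    (hiso : ∀ᵐ z ∂haarT,
      (1 / N : ℝ) * ∑ k : Fin N, ‖m (z + (((k : ℕ) : ℝ) * (2 * Real.pi / N) : ℝ))‖ ^ 2 = 1)
    -- the operator `S_m` on `L²(𝕋)`
    (S : Lp ℂ 2 haarT →L[ℂ] Lp ℂ 2 haarT)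
    (hS : ∀ ξ : Lp ℂ 2 haarT, ⇑(S ξ) =ᵐ[haarT] fun z => m z * ξ (N • z)) :
    -- the unitary subspace `⋂_{k ≥ 1} S^k L²(𝕋)` is at most one-dimensional
    (∃ ξ₀ : Lp ℂ 2 haarT,
        (⋂ k : ℕ, Set.range ⇑(S ^ (k + 1))) = Set.range fun c : ℂ => c • ξ₀)
    ∧
    -- it is nonzero iff (3.12) and (3.13) hold
    ((⋂ k : ℕ, Set.range ⇑(S ^ (k + 1))) ≠ {0} ↔
      ((∀ᵐ z ∂haarT, ‖m z‖ = 1) ∧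
        ∃ (ξ : Circle2π → ℂ) (lam : ℂ), Measurable ξ ∧ (∀ z, ‖ξ z‖ = 1) ∧ ‖lam‖ = 1 ∧
          ∀ᵐ z ∂haarT, m z * ξ (N • z) = lam * ξ z))
    ∧
    -- in that case the unitary subspace is `ℂ ξ`
    (∀ (ξ : Circle2π → ℂ) (lam : ℂ), Measurable ξ → (∀ z, ‖ξ z‖ = 1) → ‖lam‖ = 1 →
      (∀ᵐ z ∂haarT, m z * ξ (N • z) = lam * ξ z) →
      ∀ η : Lp ℂ 2 haarT,
        (η ∈ ⋂ k : ℕ, Set.range ⇑(S ^ (k + 1))) ↔ ∃ c : ℂ, ⇑η =ᵐ[haarT] fun z => c * ξ z)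
    ∧
    -- `S_m` is a shift iff no `λ̄ m` is a coboundary
    ((⋂ k : ℕ, Set.range ⇑(S ^ (k + 1))) = {0} ↔
      ¬ ∃ (lam : ℂ) (Δ : Circle2π → ℂ), ‖lam‖ = 1 ∧ Measurable Δ ∧ (∀ z, ‖Δ z‖ = 1) ∧
        ∀ᵐ z ∂haarT, (starRingEnd ℂ) lam * m z = Δ z * (Δ (N • z))⁻¹) := by
  replace hiso : ∀ᵐ z ∂haarT, fiberMean N (fun w => ‖m w‖ ^ 2) z = 1 := hiso
  replace hS : IsWeightedComposition N m S := hS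
  have hne_bot := hS.woldUnitaryPart_ne_bot_iff hN hiso
  rw [← coe_woldUnitaryPart, ← Submodule.bot_coe (R := ℂ), SetLike.coe_ne_coe, SetLike.coe_set_eq]
  refine ⟨?_, ?_, fun ξ lam hmeas hξ hlam hae η => ?_, ?_⟩
  · obtain ⟨ξ₀, hξ₀⟩ := hS.exists_woldUnitaryPart_eq_span_singleton hN hiso
    exact ⟨ξ₀, by rw [hξ₀, Submodule.span_singleton_eq_range]⟩
  · refine hne_bot.trans ⟨?_, ?_⟩
    · rintro ⟨ξ, lam, h⟩
      exact ⟨h.norm_weight_ae_eq_one, ξ, lam, h.measurable, h.norm_eq_one, h.norm_eigenvalue,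
        h.ae_eq⟩
    · rintro ⟨-, ξ, lam, hmeas, hξ, hlam, hae⟩
      exact ⟨ξ, lam, hmeas, hξ, hlam, hae⟩
  · exact hS.mem_woldUnitaryPart_iff_exists_ae_eq hN hiso ⟨hmeas, hξ, hlam, hae⟩
  · rw [← not_ne_iff, hne_bot, exists_comm]
    simp only [isUnimodularEigenfunction_iff_coboundary]
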